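/- Let τ2 ≥ τ1 ≥ 0. If the switched system ẋ(t) = f_{σ(t)}(x(t)) is globally uniformly asymptotically stable on S_dw(τ1,τ2), then there exist functions α1, α2 of class K∞ and continuous functions V_i^−, V_i^+ : ℝ^n → ℝ for i ∈ I such that: (i) α1(|x|) ≤ V_i^*(x) ≤ α2(|x|) for all i ∈ I, * ∈ {−,+} and all x ∈ ℝ^n; (ii) V_i^+(Φ_i(t,x)) ≤ e^{−t} V_i^−(x) for all i ∈ I, all t ∈ [0, τ2 − τ1] and all x ∈ ℝ^n; (iii) V_j^−(Φ_i(τ1,x)) ≤ e^{−τ1} V_i^+(x) for all i ≠ j in I and all x ∈ ℝ^n. -/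

import Mathlib

open Filter Set
open scoped Classical

noncomputable section

/-- A switching signal `σ : [0,∞) → {1,…,M}` (piecewise constant, right continuous),
encoded by the (possibly finite) strictly increasing sequence of its switching instants
`T 1 < T 2 < …` (the discontinuity points, with the convention `T 0 = 0`, and `num` the
extended-natural number of switching instants) together with the value `idx k ∈ Fin M`
taken on the `k`-th inter-switching interval `[T k, T (k+1))`. Beyond the last switching
instant the time sequence is frozen, and if there are infinitely many switching instants
they tend to `+∞`. At each switching instant the value actually changes. -/
structure Signal (M : ℕ) where
  idx : ℕ → Fin M
  T : ℕ → ℝ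
  num : ℕ∞
  T0 : T 0 = 0
  mono : ∀ k : ℕ, T k ≤ T (k + 1)
  strict : ∀ k : ℕ, (k : ℕ∞) < num → T k < T (k + 1)
  frozen : ∀ k : ℕ, num ≤ (k : ℕ∞) → T (k + 1) = T k
  change : ∀ k : ℕ, (k : ℕ∞) < num → idx k ≠ idx (k + 1)
  unbounded : num = ⊤ → Tendsto T atTop atTop

/-- The index of the inter-switching interval containing time `t`. -/
def Signal.seg {M : ℕ} (s : Signal M) (t : ℝ) : ℕ :=
  sSup {k : ℕ | (k : ℕ∞) ≤ s.num ∧ s.T k ≤ t}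

/-- Given the flow maps `Φ i` of the subsystems, the state of the switched system at the
`k`-th switching instant, starting from `x` at time `0`. -/
def Signal.state {M : ℕ} {E : Type*} (Φ : Fin M → ℝ → E → E) (s : Signal M) (x : E) : ℕ → E
  | 0 => x
  | k + 1 =>
    if (k : ℕ∞) < s.num then
      Φ (s.idx k) (s.T (k + 1) - s.T k) (Signal.state Φ s x k)
    else Signal.state Φ s x k

/-- The solution `Φ_σ(t,x)` of the switched system associated to the flow maps `Φ i` of the
subsystems, for the switching signal `s`, starting at `x` (at time `0`), evaluated at time `t`. -/
def Signal.sol {M : ℕ} {E : Type*} (Φ : Fin M → ℝ → E → E) (s : Signal M) (t : ℝ) (x : E) : E :=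
  Φ (s.idx (s.seg t)) (t - s.T (s.seg t)) (Signal.state Φ s x (s.seg t))

/-- The class `S_dw(τ1,τ2)`: switching signals with `τ1 ≤ t_k − t_{k−1} ≤ τ2` for every
switching instant `t_k > 0`. -/
def Sdw (M : ℕ) (τ1 τ2 : ℝ) : Set (Signal M) :=
  {s | ∀ k : ℕ, (k : ℕ∞) < s.num →
    τ1 ≤ s.T (k + 1) - s.T k ∧ s.T (k + 1) - s.T k ≤ τ2}

/-- The class `S*_dw(τ1,τ2)`: switching signals with `τ1 ≤ t_{k+1} − t_k ≤ τ2` for every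
switching instant `t_k > 0`, and with `t_1 ≤ τ2`. -/
def SdwStar (M : ℕ) (τ1 τ2 : ℝ) : Set (Signal M) :=
  {s | (∀ k : ℕ, 1 ≤ k → (k : ℕ∞) < s.num →
      τ1 ≤ s.T (k + 1) - s.T k ∧ s.T (k + 1) - s.T k ≤ τ2) ∧
    (1 ≤ s.num → s.T 1 ≤ τ2)}

/-- A function `α : [0,∞) → [0,∞)` of class `K∞`: continuous, vanishing at `0`,
strictly increasing and unbounded. -/
def ClassKInf (α : ℝ → ℝ) : Prop :=
  ContinuousOn α (Ici 0) ∧ α 0 = 0 ∧ StrictMonoOn α (Ici 0) ∧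
    Tendsto α atTop atTop ∧ ∀ r ∈ Ici (0 : ℝ), 0 ≤ α r

/-- A function `β : [0,∞) × [0,∞) → [0,∞)` of class `KL`. -/
def ClassKL (β : ℝ → ℝ → ℝ) : Prop :=
  ContinuousOn (Function.uncurry β) (Ici 0 ×ˢ Ici 0) ∧
  (∀ s ∈ Ici (0 : ℝ), β 0 s = 0 ∧ StrictMonoOn (fun r => β r s) (Ici 0)) ∧
  (∀ r ∈ Ici (0 : ℝ), AntitoneOn (β r) (Ici 0) ∧ Tendsto (β r) atTop (nhds 0)) ∧
  (∀ r ∈ Ici (0 : ℝ), ∀ s ∈ Ici (0 : ℝ), 0 ≤ β r s)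

/-- Global uniform asymptotic stability (GUAS) of the switched system with subsystem flows
`Φ i` over the class `S` of switching signals. -/
def GUAS {M : ℕ} {E : Type*} [NormedAddCommGroup E] (Φ : Fin M → ℝ → E → E)
    (S : Set (Signal M)) : Prop :=
  ∃ β : ℝ → ℝ → ℝ, ClassKL β ∧
    ∀ s ∈ S, ∀ x : E, ∀ t ≥ (0 : ℝ), ‖Signal.sol Φ s t x‖ ≤ β ‖x‖ t

/-- Uniform exponential stability with decay `ρ` (`ρ`-UES) of the switched system with
subsystem flows `Φ i` over the class `S` of switching signals. -/
def UES {M : ℕ} {E : Type*} [NormedAddCommGroup E] (ρ : ℝ) (Φ : Fin M → ℝ → E → E)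
    (S : Set (Signal M)) : Prop :=
  ∃ C : ℝ, 0 ≤ C ∧ ∀ s ∈ S, ∀ x : E, ∀ t ≥ (0 : ℝ),
    ‖Signal.sol Φ s t x‖ ≤ C * Real.exp (-ρ * t) * ‖x‖

lemma kl_h (β : ℝ → ℝ → ℝ) (hβ : ClassKL β) :
    ∃ h : ℝ → ℝ, Continuous h ∧ Monotone h ∧ (∀ r, 0 ≤ h r) ∧
      ∀ r > 0, ∀ t ≥ h r, β r t < 1 / r := by
  obtain ⟨-, hmono, htend, -⟩ := hβ
  have hT : ∀ n : ℕ, ∃ T : ℝ, 0 ≤ T ∧ ∀ t ≥ T, β n t < 1 / ((n : ℝ) + 1) := by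
    intro n
    have h1 := (htend n (by simp)).2
    have h2 : ∀ᶠ t in atTop, β n t < 1 / ((n : ℝ) + 1) :=
      h1.eventually (gt_mem_nhds (by positivity))
    obtain ⟨T, hT⟩ := eventually_atTop.1 h2
    exact ⟨max T 0, le_max_right _ _, fun t ht => hT t (le_trans (le_max_left _ _) ht)⟩
  choose T hT0 hT using hT
  let p : ℝ → ℝ := fun r => ∑ k ∈ Finset.range (⌈r⌉₊ + 1), T k
  have hp : Monotone p := by
    intro a b hab
    apply Finset.sum_le_sum_of_subset_of_nonneg
    · intro k hk
      have := Nat.ceil_mono hab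
      simp only [Finset.mem_range] at *
      omega
    · intro k _ _; exact hT0 k
  have hp0 : ∀ r, 0 ≤ p r := fun r => Finset.sum_nonneg fun k _ => hT0 k
  have hpT : ∀ r, T ⌈r⌉₊ ≤ p r := fun r =>
    Finset.single_le_sum (f := T) (fun k _ => hT0 k) (by simp)
  have hpi : ∀ a b, IntervalIntegrable p MeasureTheory.volume a b :=
    fun a b => hp.intervalIntegrable
  have hpi' : ∀ r, IntervalIntegrable (fun x => p (x + r)) MeasureTheory.volume 0 1 := by
    intro r
    have : Monotone (fun x => p (x + r)) := fun a b hab => hp (by linarith)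
    exact this.intervalIntegrable
  have key : ∀ r, p r ≤ ∫ x in (0:ℝ)..1, p (x + r) := by
    intro r
    have := intervalIntegral.integral_mono_on (a := 0) (b := 1) (f := fun _ => p r)
      (g := fun x => p (x + r)) (μ := MeasureTheory.volume) zero_le_one (by simp) (hpi' r)
      (fun x hx => hp (by linarith [hx.1]))
    simpa using this
  refine ⟨fun r => ∫ x in (0:ℝ)..1, p (x + r), ?_, ?_, ?_, ?_⟩
  · have : (fun r => ∫ x in (0:ℝ)..1, p (x + r)) =
        fun r => (∫ x in (0:ℝ)..(1 + r), p x) - ∫ x in (0:ℝ)..r, p x := by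
      funext r
      rw [intervalIntegral.integral_comp_add_right, zero_add,
        intervalIntegral.integral_interval_sub_left (hpi _ _) (hpi _ _)]
    rw [this]
    have hc := intervalIntegral.continuous_primitive (μ := MeasureTheory.volume) hpi 0
    exact (hc.comp (continuous_const.add continuous_id)).sub hc
  · intro a b hab
    exact intervalIntegral.integral_mono_on zero_le_one (hpi' a) (hpi' b)
      (fun x hx => hp (by linarith))
  · intro r; exact (hp0 r).trans (key r)
  · intro r hr t ht
    have h0 : T ⌈r⌉₊ ≤ t := (hpT r).trans ((key r).trans ht)
    have ht0 : 0 ≤ t := (hT0 _).trans h0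
    have h1 := hT _ t h0
    have h2 : β r t ≤ β ⌈r⌉₊ t :=
      (hmono t ht0).2.monotoneOn (mem_Ici.2 hr.le) (by simp) (Nat.le_ceil r)
    have h3 : 1 / ((⌈r⌉₊ : ℝ) + 1) ≤ 1 / r :=
      one_div_le_one_div_of_le hr (by linarith [Nat.le_ceil r])
    linarith

lemma kl_lemma (β : ℝ → ℝ → ℝ) (hβ : ClassKL β) :
    ∃ a γ : ℝ → ℝ, LipschitzWith 1 a ∧ Monotone a ∧ a 0 = 0 ∧ (∀ y > 0, 0 < a y) ∧
      Tendsto a atTop atTop ∧ ClassKInf γ ∧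
      ∀ r ≥ 0, ∀ t ≥ 0, a (β r t) ≤ γ r * Real.exp (-2 * t) := by
  obtain ⟨h, hc, hm, h0, hh⟩ := kl_h β hβ
  obtain ⟨hcont, hmono, htend, hnn⟩ := hβ
  have hmon : ∀ t ≥ 0, ∀ r ≥ 0, ∀ r' ≥ r, β r t ≤ β r' t := fun t ht r hr r' hr' =>
    (hmono t ht).2.monotoneOn (mem_Ici.2 hr) (mem_Ici.2 (le_trans hr hr')) hr'
  have hanti : ∀ r ≥ 0, ∀ t ≥ 0, β r t ≤ β r 0 := fun r hr t ht =>
    (htend r hr).1 (mem_Ici.2 le_rfl) (mem_Ici.2 ht) ht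
  let γ : ℝ → ℝ := fun r => r * Real.exp (2 * h r)
  have hγr : ∀ r ≥ 0, r ≤ γ r := fun r hr =>
    le_mul_of_one_le_right hr (Real.one_le_exp (by linarith [h0 r]))
  have hγ0 : ∀ r ≥ 0, 0 ≤ γ r := fun r hr => le_trans hr (hγr r hr)
  have hbig : ∀ r > 0, ∀ t ≥ 0, 1 / r ≤ β r t → r ≤ γ r * Real.exp (-2 * t) := by
    intro r hr t ht hb
    have : t < h r := by
      by_contra hcon
      exact absurd (hh r hr t (not_lt.1 hcon)) (not_lt.2 hb)
    rw [mul_assoc, ← Real.exp_add]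
    exact le_mul_of_one_le_right hr.le (Real.one_le_exp (by linarith))
  have low : ∀ y > 0, ∃ c > 0, ∀ r ≥ 0, ∀ t ≥ 0, y ≤ β r t → c ≤ γ r * Real.exp (-2 * t) := by
    intro y hy
    have hr0 : ∃ r0 > 0, β r0 0 < y := by
      have h1 : ContinuousWithinAt (fun r => β r 0) (Ici 0) 0 := by
        have := hcont (0, 0) (by simp)
        exact ContinuousWithinAt.comp (t := Ici 0 ×ˢ Ici 0) (f := fun r : ℝ => (r, (0:ℝ)))
          (x := 0) this (by fun_prop) (fun r hr => by simpa using hr)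
      have h2 : ∀ᶠ r in nhdsWithin 0 (Ici 0), β r 0 < y :=
        h1.eventually (gt_mem_nhds (by simpa [(hmono 0 (by simp)).1] using hy))
      have h3 : ∀ᶠ r in nhdsWithin (0:ℝ) (Ioi 0), β r 0 < y ∧ 0 < r :=
        (h2.filter_mono (nhdsWithin_mono _ Ioi_subset_Ici_self)).and self_mem_nhdsWithin
      obtain ⟨r, h4, h5⟩ := h3.exists
      exact ⟨r, h5, h4⟩
    obtain ⟨r0, hr0, hr0y⟩ := hr0
    refine ⟨min (1 / y) (r0 * Real.exp (-2 * h (1 / y))), by positivity, ?_⟩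
    intro r hr t ht hb
    have hrr0 : r0 ≤ r := by
      by_contra hcon
      have := hmon 0 le_rfl r hr r0 (not_le.1 hcon).le
      linarith [hanti r hr t ht]
    have hrpos : 0 < r := lt_of_lt_of_le hr0 hrr0
    rcases le_total (1 / y) r with hry | hry
    · refine (min_le_left _ _).trans (hry.trans (hbig r hrpos t ht ?_))
      exact le_trans ((one_div_le hrpos hy).2 hry) hb
    · refine (min_le_right _ _).trans ?_
      have h1 : t < h (1 / y) := by
        by_contra hcon
        have h2 := hh (1 / y) (by positivity) t (not_lt.1 hcon)
        have h3 := hmon t ht r hr _ hry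
        rw [one_div_one_div] at h2
        linarith
      apply mul_le_mul (hrr0.trans (hγr r hr)) _ (Real.exp_pos _).le (hγ0 r hr)
      exact Real.exp_le_exp.2 (by linarith)
  have up : ∀ N : ℝ, ∃ Y, ∀ r ≥ 0, ∀ t ≥ 0, Y ≤ β r t → N ≤ γ r * Real.exp (-2 * t) := by
    intro N
    have hN1 : (1:ℝ) ≤ max N 1 := le_max_right _ _
    have hN0 : (0:ℝ) ≤ max N 1 := by linarith
    refine ⟨β (max N 1) 0 + 1, ?_⟩
    intro r hr t ht hb
    have h1 : max N 1 ≤ r := by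
      by_contra hcon
      have := hmon 0 le_rfl r hr _ (not_le.1 hcon).le
      linarith [hanti r hr t ht]
    refine (le_max_left _ _).trans (h1.trans (hbig r (by linarith) t ht ?_))
    have h2 : 1 / r ≤ 1 := by
      rw [div_le_one (by linarith)]; linarith
    linarith [hnn (max N 1) hN0 0 (by simp)]
  let F : Ici (0:ℝ) × Ici (0:ℝ) → ℝ → ℝ := fun p y =>
    γ p.1 * Real.exp (-2 * p.2) + max 0 (y - β p.1 p.2)
  have hF0 : ∀ p y, 0 ≤ F p y := fun p y =>
    add_nonneg (mul_nonneg (hγ0 _ p.1.2) (Real.exp_pos _).le) (le_max_left _ _)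
  have hbd : ∀ y, BddBelow (range fun p => F p y) := fun y =>
    ⟨0, by rintro _ ⟨p, rfl⟩; exact hF0 p y⟩
  have : Nonempty (Ici (0:ℝ) × Ici (0:ℝ)) := ⟨(⟨0, by simp⟩, ⟨0, by simp⟩)⟩
  let a : ℝ → ℝ := fun y => ⨅ p, F p y
  have hamono : Monotone a := by
    intro y z hyz
    apply ciInf_mono (hbd y)
    intro p
    show _ + _ ≤ _ + _
    gcongr
  have half : ∀ y > 0, ∀ c, (∀ r ≥ 0, ∀ t ≥ 0, y / 2 ≤ β r t → c ≤ γ r * Real.exp (-2 * t)) →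
      min c (y / 2) ≤ a y := by
    intro y hy c hcc
    apply le_ciInf
    rintro ⟨⟨r, hr⟩, ⟨t, ht⟩⟩
    show _ ≤ γ r * Real.exp (-2 * t) + max 0 (y - β r t)
    rcases le_total (y / 2) (β r t) with hb | hb
    · have := hcc r hr t ht hb
      linarith [min_le_left c (y/2), le_max_left 0 (y - β r t)]
    · have : 0 ≤ γ r * Real.exp (-2 * t) := mul_nonneg (hγ0 r hr) (Real.exp_pos _).le
      linarith [min_le_right c (y/2), le_max_right 0 (y - β r t)]
  refine ⟨a, γ, ?_, hamono, ?_, ?_, ?_, ?_, ?_⟩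
  · apply LipschitzWith.of_le_add
    intro y z
    rw [← sub_le_iff_le_add]
    apply le_ciInf
    intro p
    rw [sub_le_iff_le_add]
    refine (ciInf_le (hbd y) p).trans ?_
    show _ + max 0 (y - _) ≤ _ + max 0 (z - _) + _
    have h1 : y - z ≤ dist y z := by rw [Real.dist_eq]; exact le_abs_self _
    have h2 := dist_nonneg (x := y) (y := z)
    have : max 0 (y - β p.1 p.2) ≤ max 0 (z - β p.1 p.2) + dist y z := by
      apply max_le
      · linarith [le_max_left 0 (z - β p.1 p.2)]
      · linarith [le_max_right 0 (z - β p.1 p.2)]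
    linarith
  · apply le_antisymm
    · refine (ciInf_le (hbd 0) (⟨0, by simp⟩, ⟨0, by simp⟩)).trans ?_
      simp [F, γ, (hmono 0 (by simp)).1]
    · exact le_ciInf fun p => hF0 p 0
  · intro y hy
    obtain ⟨c, hc0, hcc⟩ := low (y / 2) (by positivity)
    exact lt_of_lt_of_le (lt_min hc0 (by positivity)) (half y hy c hcc)
  · rw [tendsto_atTop]
    intro N
    obtain ⟨Y, hY⟩ := up N
    filter_upwards [eventually_ge_atTop (2 * Y), eventually_ge_atTop (2 * N),
      eventually_gt_atTop 0] with y h1 h2 h3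
    have := half y h3 N (fun r hr t ht hb => hY r hr t ht (by linarith))
    rw [min_eq_left (by linarith)] at this
    exact this
  · refine ⟨by fun_prop, by simp [γ], ?_, ?_, fun r hr => hγ0 r hr⟩
    · intro r hr s hs hrs
      have hr' : 0 ≤ r := hr
      have : Real.exp (2 * h r) ≤ Real.exp (2 * h s) :=
        Real.exp_le_exp.2 (by linarith [hm hrs.le])
      calc γ r ≤ r * Real.exp (2 * h s) := mul_le_mul_of_nonneg_left this hr'
        _ < s * Real.exp (2 * h s) := mul_lt_mul_of_pos_right hrs (Real.exp_pos _)
    · refine tendsto_atTop_mono' _ ?_ tendsto_id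
      filter_upwards [eventually_ge_atTop 0] with r hr using hγr r hr
  · intro r hr t ht
    refine (ciInf_le (hbd _) (⟨r, hr⟩, ⟨t, ht⟩)).trans ?_
    simp [F]

/-- Evaluation maps of (generalised) switched trajectories starting with index `i`. -/
inductive Adm {M : ℕ} {E : Type*} (Φ : Fin M → ℝ → E → E) (D : ℝ → Prop) :
    Fin M → ℝ → (E → E) → Prop
  | base (i : Fin M) (t : ℝ) (ht : 0 ≤ t) : Adm Φ D i t (Φ i t)
  | step (i j : Fin M) (d t : ℝ) (g : E → E) (hij : i ≠ j) (hd : D d) (h : Adm Φ D j t g) :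
      Adm Φ D i (t + d) (fun x => g (Φ i d x))

lemma Adm.nonneg {M : ℕ} {E : Type*} {Φ : Fin M → ℝ → E → E} {D : ℝ → Prop}
    (hD : ∀ d, D d → 0 ≤ d) {i t g} (h : Adm Φ D i t g) : 0 ≤ t := by
  induction h with
  | base i t ht => exact ht
  | step i j d t g hij hd h ih => linarith [hD d hd]

def Signal.const {M : ℕ} (i : Fin M) : Signal M where
  idx := fun _ => i
  T := fun _ => 0
  num := 0
  T0 := rfl
  mono := fun _ => le_rfl
  strict := fun k hk => by simp at hk
  frozen := fun _ _ => rfl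
  change := fun k hk => by simp at hk
  unbounded := fun h => by simp at h

def Signal.cons {M : ℕ} (i : Fin M) (d : ℝ) (hd : 0 < d) (s : Signal M) (hi : i ≠ s.idx 0) :
    Signal M where
  idx := fun k => Nat.casesOn k i s.idx
  T := fun k => Nat.casesOn k 0 (fun k => d + s.T k)
  num := s.num + 1
  T0 := rfl
  mono := fun k => by
    cases k with
    | zero => simp [s.T0, hd.le]
    | succ k => simpa using s.mono k
  strict := fun k hk => by
    cases k with
    | zero => simp [s.T0, hd]
    | succ k =>
      have : (k : ℕ∞) < s.num := by
        push_cast at hk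
        exact lt_of_add_lt_add_right hk
      simpa using s.strict k this
  frozen := fun k hk => by
    cases k with
    | zero => simp at hk
    | succ k =>
      have : s.num ≤ (k : ℕ∞) := by
        push_cast at hk
        exact (ENat.add_le_add_iff_right (by simp)).1 hk
      simpa using s.frozen k this
  change := fun k hk => by
    cases k with
    | zero => simpa using hi
    | succ k =>
      have : (k : ℕ∞) < s.num := by
        push_cast at hk
        exact lt_of_add_lt_add_right hk
      simpa using s.change k this
  unbounded := fun h => by
    have : s.num = ⊤ := by
      by_contra hc
      simp [hc] at h
    have h1 := s.unbounded this
    rw [← tendsto_add_atTop_iff_nat 1]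
    exact tendsto_atTop_add_const_left _ d h1

lemma Signal.cons_state {M : ℕ} {E : Type*} (Φ : Fin M → ℝ → E → E) (i : Fin M) (d : ℝ)
    (hd : 0 < d) (s : Signal M) (hi : i ≠ s.idx 0) (x : E) (k : ℕ) :
    Signal.state Φ (Signal.cons i d hd s hi) x (k + 1) = Signal.state Φ s (Φ i d x) k := by
  induction k with
  | zero => simp [Signal.state, Signal.cons, s.T0]
  | succ k ih =>
    rw [Signal.state, ih, Signal.state]
    have : (((k + 1 : ℕ) : ℕ∞) < (Signal.cons i d hd s hi).num) ↔ ((k : ℕ∞) < s.num) := by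
      show (((k + 1 : ℕ) : ℕ∞) < s.num + 1) ↔ _
      push_cast
      exact ENat.add_lt_add_iff_right (by simp)
    simp only [this]
    simp [Signal.cons]

lemma Signal.sol_of_num {M : ℕ} {E : Type*} (Φ : Fin M → ℝ → E → E) (s : Signal M) (m : ℕ)
    (hm : s.num = m) (t : ℝ) (ht : s.T m ≤ t) (x : E) :
    Signal.sol Φ s t x = Φ (s.idx m) (t - s.T m) (Signal.state Φ s x m) := by
  have : s.seg t = m := by
    have hg : IsGreatest {k : ℕ | (k : ℕ∞) ≤ s.num ∧ s.T k ≤ t} m := by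
      refine ⟨⟨by rw [hm], ht⟩, ?_⟩
      rintro k ⟨hk, -⟩
      rw [hm] at hk
      exact_mod_cast hk
    exact hg.csSup_eq
  rw [Signal.sol, this]

lemma Adm.signal {M : ℕ} {E : Type*} {Φ : Fin M → ℝ → E → E} {τ1 τ2 : ℝ}
    {i t g} (h : Adm Φ (fun d => d ∈ Icc τ1 τ2 ∧ 0 < d) i t g) :
    ∃ s ∈ Sdw M τ1 τ2, s.idx 0 = i ∧ ∃ m : ℕ, s.num = m ∧ s.T m ≤ t ∧
      ∀ x, g x = Φ (s.idx m) (t - s.T m) (Signal.state Φ s x m) := by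
  induction h with
  | base i t ht =>
    refine ⟨Signal.const i, ?_, rfl, 0, rfl, ht, ?_⟩
    · intro k hk; simp [Signal.const] at hk
    · intro x; simp [Signal.const, Signal.state]
  | step i j d t g hij hd h ih =>
    obtain ⟨s, hs, hj, m, hm, hT, hg⟩ := ih
    refine ⟨Signal.cons i d hd.2 s (by rw [hj]; exact hij), ?_, rfl, m + 1, ?_, ?_, ?_⟩
    · intro k hk
      cases k with
      | zero => simpa [Signal.cons, s.T0] using hd.1
      | succ k =>
        have : (k : ℕ∞) < s.num := by
          change ((k + 1 : ℕ) : ℕ∞) < s.num + 1 at hk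
          push_cast at hk
          exact lt_of_add_lt_add_right hk
        simpa [Signal.cons] using hs k this
    · show s.num + 1 = _
      rw [hm]; push_cast; rfl
    · show d + s.T m ≤ t + d
      linarith
    · intro x
      rw [Signal.cons_state]
      show g (Φ i d x) = _
      rw [hg]
      show _ = Φ (s.idx m) (t + d - (d + s.T m)) _
      congr 1
      ring

lemma Adm.bound_pos {M : ℕ} {E : Type*} [NormedAddCommGroup E] {Φ : Fin M → ℝ → E → E}
    {τ1 τ2 : ℝ} {β : ℝ → ℝ → ℝ}
    (hb : ∀ s ∈ Sdw M τ1 τ2, ∀ x : E, ∀ t ≥ (0 : ℝ), ‖Signal.sol Φ s t x‖ ≤ β ‖x‖ t)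
    {i t g} (h : Adm Φ (fun d => d ∈ Icc τ1 τ2 ∧ 0 < d) i t g) (x : E) :
    ‖g x‖ ≤ β ‖x‖ t := by
  obtain ⟨s, hs, -, m, hm, hT, hg⟩ := h.signal
  have := hb s hs x t (h.nonneg fun d hd => hd.2.le)
  rwa [Signal.sol_of_num Φ s m hm t hT, ← hg] at this

lemma flow_lip {M : ℕ} {E : Type*} [NormedAddCommGroup E] [NormedSpace ℝ E] [ProperSpace E]
    (f : Fin M → E → E) (Φ : Fin M → ℝ → E → E)
    (hlip : ∀ i, LocallyLipschitz (f i)) (hΦ0 : ∀ i x, Φ i 0 x = x)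
    (hode : ∀ i x t, HasDerivAt (fun τ => Φ i τ x) (f i (Φ i t x)) t) (B : ℝ) :
    ∃ K : NNReal, ∀ i x y t, 0 ≤ t → (∀ s ≥ 0, ‖Φ i s x‖ ≤ B) → (∀ s ≥ 0, ‖Φ i s y‖ ≤ B) →
      dist (Φ i t x) (Φ i t y) ≤ dist x y * Real.exp (K * t) := by
  have h1 : ∀ i, ∃ K, LipschitzOnWith K (f i) (Metric.closedBall 0 B) := fun i =>
    LocallyLipschitzOn.exists_lipschitzOnWith_of_compact (isCompact_closedBall 0 B)
      ((hlip i).locallyLipschitzOn)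
  choose K hK using h1
  refine ⟨Finset.univ.sup K, ?_⟩
  intro i x y t ht hx hy
  have hc : ∀ z, Continuous (fun τ => Φ i τ z) := fun z =>
    continuous_iff_continuousAt.2 fun s => (hode i z s).continuousAt
  have := dist_le_of_trajectories_ODE_of_mem (v := fun _ => f i)
    (s := fun _ => Metric.closedBall 0 B) (K := Finset.univ.sup K) (a := 0) (b := t)
    (f := fun τ => Φ i τ x) (g := fun τ => Φ i τ y) (δ := dist x y)
    (fun s _ => (hK i).weaken (Finset.le_sup (Finset.mem_univ i)))
    (hc x).continuousOn (fun s _ => (hode i x s).hasDerivWithinAt)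
    (fun s hs => by simpa using hx s hs.1)
    (hc y).continuousOn (fun s _ => (hode i y s).hasDerivWithinAt)
    (fun s hs => by simpa using hy s hs.1) (by simp [hΦ0]) t ⟨ht, le_rfl⟩
  simpa using this

lemma flow_cont {M : ℕ} {E : Type*} [NormedAddCommGroup E] [NormedSpace ℝ E] [ProperSpace E]
    (f : Fin M → E → E) (Φ : Fin M → ℝ → E → E)
    (hlip : ∀ i, LocallyLipschitz (f i)) (hΦ0 : ∀ i x, Φ i 0 x = x)
    (hode : ∀ i x t, HasDerivAt (fun τ => Φ i τ x) (f i (Φ i t x)) t)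
    (hbd : ∀ R, ∃ B, ∀ i x t, 0 ≤ t → ‖x‖ ≤ R → ‖Φ i t x‖ ≤ B) (i : Fin M) :
    ContinuousOn (fun p : ℝ × E => Φ i p.1 p.2) (Ici 0 ×ˢ univ) := by
  rintro ⟨t0, x0⟩ ⟨ht0, -⟩
  have ht0' : 0 ≤ t0 := ht0
  obtain ⟨B, hB⟩ := hbd (‖x0‖ + 1)
  obtain ⟨K, hK⟩ := flow_lip f Φ hlip hΦ0 hode B
  have h1 : ContinuousOn (fun p : ℝ × E => Φ i p.1 p.2)
      (Icc 0 (t0 + 1) ×ˢ Metric.closedBall 0 (‖x0‖ + 1)) := by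
    apply continuousOn_prod_of_continuousOn_lipschitzOnWith' _
      (Real.toNNReal (Real.exp (K * (t0 + 1))))
    · intro t ht
      apply LipschitzOnWith.of_dist_le_mul
      intro x hx y hy
      rw [Real.coe_toNNReal _ (Real.exp_pos _).le, mul_comm]
      refine (hK i x y t ht.1 (fun s hs => hB i x s hs (by simpa using hx))
        (fun s hs => hB i y s hs (by simpa using hy))).trans ?_
      have := ht.2
      gcongr
    · intro x _
      exact (continuous_iff_continuousAt.2 fun s => (hode i x s).continuousAt).continuousOn
  refine (h1 (t0, x0) ⟨⟨ht0', by linarith⟩, by simp⟩).mono_of_mem_nhdsWithin ?_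
  have h2 : Iio (t0 + 1) ×ˢ Metric.ball (0:E) (‖x0‖ + 1) ∈ nhds (t0, x0) :=
    (isOpen_Iio.prod Metric.isOpen_ball).mem_nhds ⟨by simp, by simp⟩
  filter_upwards [mem_nhdsWithin_of_mem_nhds h2, self_mem_nhdsWithin] with p hp hq
  exact ⟨⟨hq.1, (mem_Iio.1 hp.1).le⟩, Metric.ball_subset_closedBall hp.2⟩

lemma Adm.approx {M : ℕ} {E : Type*} [NormedAddCommGroup E]
    {Φ : Fin M → ℝ → E → E}
    (hcont : ∀ i, ContinuousOn (fun p : ℝ × E => Φ i p.1 p.2) (Ici 0 ×ˢ univ))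
    {τ1 τ2 : ℝ} (hτ1 : 0 ≤ τ1) (hτ2 : 0 < τ2)
    {i t g} (h : Adm Φ (fun d => d ∈ Icc τ1 τ2) i t g) :
    ∃ (T : ℝ → ℝ) (G : ℝ → E → E), Continuous T ∧ T 0 = t ∧ (∀ x, G 0 x = g x) ∧
      (∀ ε > 0, Adm Φ (fun d => d ∈ Icc τ1 τ2 ∧ 0 < d) i (T ε) (G ε)) ∧
      Continuous (fun p : ℝ × E => G p.1 p.2) := by
  induction h with
  | base i t ht =>
    refine ⟨fun _ => t, fun _ => Φ i t, continuous_const, rfl, fun _ => rfl,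
      fun ε _ => Adm.base i t ht, ?_⟩
    exact (hcont i).comp_continuous (f := fun p : ℝ × E => (t, p.2)) (by fun_prop)
      (fun p => ⟨ht, trivial⟩)
  | step i j d t g hij hd h ih =>
    obtain ⟨T, G, hT, hT0, hG0, hA, hG⟩ := ih
    have hd0 : 0 ≤ d := hτ1.trans hd.1
    refine ⟨fun ε => T ε + max d (min ε τ2), fun ε x => G ε (Φ i (max d (min ε τ2)) x),
      by fun_prop, ?_, ?_, ?_, ?_⟩
    · simp [hT0, min_eq_left hτ2.le, max_eq_left hd0]
    · intro x
      simp [hG0, min_eq_left hτ2.le, max_eq_left hd0]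
    · intro ε hε
      exact Adm.step i j _ _ _ hij ⟨⟨le_max_of_le_left hd.1, max_le hd.2 (min_le_right _ _)⟩,
        lt_max_of_lt_right (lt_min hε hτ2)⟩ (hA ε hε)
    · have h1 : Continuous (fun p : ℝ × E => Φ i (max d (min p.1 τ2)) p.2) :=
        (hcont i).comp_continuous (f := fun p : ℝ × E => (max d (min p.1 τ2), p.2))
          (by fun_prop) (fun p => ⟨le_max_of_le_left hd0, trivial⟩)
      exact hG.comp (continuous_fst.prodMk h1)

lemma Adm.bound {M : ℕ} {E : Type*} [NormedAddCommGroup E] {Φ : Fin M → ℝ → E → E}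
    (hΦ0 : ∀ i x, Φ i 0 x = x)
    (hcont : ∀ i, ContinuousOn (fun p : ℝ × E => Φ i p.1 p.2) (Ici 0 ×ˢ univ))
    {τ1 τ2 : ℝ} (hτ1 : 0 ≤ τ1) (hτ12 : τ1 ≤ τ2) {β : ℝ → ℝ → ℝ} (hβ : ClassKL β)
    (hb : ∀ s ∈ Sdw M τ1 τ2, ∀ x : E, ∀ t ≥ (0 : ℝ), ‖Signal.sol Φ s t x‖ ≤ β ‖x‖ t)
    {i t g} (h : Adm Φ (fun d => d ∈ Icc τ1 τ2) i t g) (x : E) :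
    ‖g x‖ ≤ β ‖x‖ t := by
  have ht : 0 ≤ t := h.nonneg fun d hd => hτ1.trans hd.1
  rcases (hτ1.trans hτ12).eq_or_lt with h0 | h0
  · subst h0
    have : ∃ j, ∀ x, g x = Φ j t x := by
      clear ht
      induction h with
      | base i t ht => exact ⟨i, fun _ => rfl⟩
      | step i j d t g hij hd h ih =>
        have hd0 : d = 0 := le_antisymm hd.2 (hτ1.trans hd.1)
        obtain ⟨k, hk⟩ := ih
        exact ⟨k, fun x => by simp [hd0, hΦ0, hk]⟩
    obtain ⟨j, hj⟩ := this
    rw [hj]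
    exact (Adm.base j t ht).bound_pos hb x
  · obtain ⟨T, G, hT, hT0, hG0, hA, hG⟩ := h.approx hcont hτ1 h0
    have h1 : Tendsto (fun ε => ‖G ε x‖) (nhdsWithin 0 (Ioi 0)) (nhds ‖g x‖) := by
      have : Continuous (fun ε => ‖G ε x‖) :=
        (hG.comp (continuous_id.prodMk continuous_const)).norm
      have h2 := this.tendsto 0
      simp only [hG0] at h2
      exact h2.mono_left nhdsWithin_le_nhds
    have h2 : Tendsto (fun ε => β ‖x‖ (T ε)) (nhdsWithin 0 (Ioi 0)) (nhds (β ‖x‖ t)) := by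
      have h3 := hβ.1 (‖x‖, t) ⟨norm_nonneg x, ht⟩
      have h4 : Tendsto (fun ε => (‖x‖, T ε)) (nhdsWithin 0 (Ioi 0))
          (nhdsWithin (‖x‖, t) (Ici 0 ×ˢ Ici 0)) := by
        rw [tendsto_nhdsWithin_iff]
        constructor
        · have : Continuous (fun ε => (‖x‖, T ε)) := by fun_prop
          have h5 := this.tendsto 0
          simp only [hT0] at h5
          exact h5.mono_left nhdsWithin_le_nhds
        · filter_upwards [self_mem_nhdsWithin] with ε hε
          exact ⟨norm_nonneg x, (hA ε hε).nonneg fun d hd => hd.2.le⟩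
      have h6 : Tendsto (Function.uncurry β) _ (nhds (β ‖x‖ t)) := h3
      have h7 := Tendsto.comp h6 h4
      exact h7
    refine le_of_tendsto_of_tendsto h1 h2 ?_
    filter_upwards [self_mem_nhdsWithin] with ε hε
    exact (hA ε hε).bound_pos hb x

lemma Adm.lip {M : ℕ} {E : Type*} [NormedAddCommGroup E]
    {Φ : Fin M → ℝ → E → E} {D : ℝ → Prop} (hD : ∀ d, D d → 0 ≤ d) {B : ℝ} {K : NNReal}
    (hK : ∀ i x y t, 0 ≤ t → (∀ s ≥ 0, ‖Φ i s x‖ ≤ B) → (∀ s ≥ 0, ‖Φ i s y‖ ≤ B) →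
      dist (Φ i t x) (Φ i t y) ≤ dist x y * Real.exp (K * t))
    {i t g} (h : Adm Φ D i t g) : ∀ x y, (∀ s h, Adm Φ D i s h → ‖h x‖ ≤ B) →
      (∀ s h, Adm Φ D i s h → ‖h y‖ ≤ B) → dist (g x) (g y) ≤ dist x y * Real.exp (K * t) := by
  induction h with
  | base i t ht =>
    intro x y hx hy
    exact hK i x y t ht (fun s hs => hx s _ (Adm.base i s hs))
      (fun s hs => hy s _ (Adm.base i s hs))
  | step i j d t g hij hd h ih =>
    intro x y hx hy
    have h1 := ih (Φ i d x) (Φ i d y)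
      (fun s h hs => hx _ _ (Adm.step i j d s h hij hd hs))
      (fun s h hs => hy _ _ (Adm.step i j d s h hij hd hs))
    have h2 := hK i x y d (hD d hd) (fun s hs => hx s _ (Adm.base i s hs))
      (fun s hs => hy s _ (Adm.base i s hs))
    calc _ ≤ _ := h1
      _ ≤ (dist x y * Real.exp (K * d)) * Real.exp (K * t) := by gcongr
      _ = _ := by rw [mul_assoc, ← Real.exp_add]; congr 2; ring

/-- The supremum used to define the Lyapunov functions. -/
def supV {E : Type*} [NormedAddCommGroup E] (a : ℝ → ℝ) (A : ℝ → (E → E) → Prop) (x : E) : ℝ :=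
  sSup {v | ∃ t g, A t g ∧ v = Real.exp t * a ‖g x‖}

lemma supV_le {E : Type*} [NormedAddCommGroup E] {a : ℝ → ℝ} {A : ℝ → (E → E) → Prop} {x : E}
    {c : ℝ} (hne : ∃ t g, A t g) (h : ∀ t g, A t g → Real.exp t * a ‖g x‖ ≤ c) :
    supV a A x ≤ c := by
  obtain ⟨t, g, hA⟩ := hne
  unfold supV
  refine csSup_le ⟨Real.exp t * a ‖g x‖, t, g, hA, rfl⟩ ?_
  rintro _ ⟨t, g, hA, rfl⟩
  exact h t g hA

lemma supV_continuous {E : Type*} [NormedAddCommGroup E] {a γ : ℝ → ℝ}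
    {A : ℝ → (E → E) → Prop} (ha : LipschitzWith 1 a) (hγ : MonotoneOn γ (Ici 0))
    (hγ0 : ∀ r ≥ 0, 0 ≤ γ r)
    (ha0 : ∀ r ≥ 0, 0 ≤ a r)
    (hne : ∃ t g, A t g) (hA0 : ∀ t g, A t g → 0 ≤ t)
    (hbd : ∀ t g, A t g → ∀ x, Real.exp t * a ‖g x‖ ≤ γ ‖x‖ * Real.exp (-t))
    (hlip : ∀ R, ∃ K : NNReal, ∀ t g, A t g → ∀ x y, ‖x‖ ≤ R → ‖y‖ ≤ R →
      dist (g x) (g y) ≤ dist x y * Real.exp (K * t)) :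
    Continuous (supV a A) := by
  have hne' : ∀ x, {v | ∃ t g, A t g ∧ v = Real.exp t * a ‖g x‖}.Nonempty := by
    intro x
    obtain ⟨t, g, h⟩ := hne
    exact ⟨_, t, g, h, rfl⟩
  have hbdd : ∀ x, BddAbove {v | ∃ t g, A t g ∧ v = Real.exp t * a ‖g x‖} := by
    intro x
    refine ⟨γ ‖x‖, ?_⟩
    rintro _ ⟨t, g, h, rfl⟩
    refine (hbd t g h x).trans (mul_le_of_le_one_right (hγ0 _ (norm_nonneg _)) ?_)
    exact Real.exp_le_one_iff.2 (by linarith [hA0 t g h])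
  have hV0 : ∀ x, 0 ≤ supV a A x := by
    intro x
    obtain ⟨t, g, h⟩ := hne
    exact le_trans (mul_nonneg (Real.exp_pos t).le (ha0 _ (norm_nonneg (g x))))
      (le_csSup (hbdd x) ⟨t, g, h, rfl⟩)
  rw [Metric.continuous_iff]
  intro x0 ε hε
  obtain ⟨K, hK⟩ := hlip (‖x0‖ + 1)
  obtain ⟨T, hT⟩ : ∃ T : ℝ, γ (‖x0‖ + 1) * Real.exp (-T) < ε / 2 := by
    have h1 : Tendsto (fun T => γ (‖x0‖ + 1) * Real.exp (-T)) atTop (nhds 0) := by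
      simpa using (Real.tendsto_exp_neg_atTop_nhds_zero).const_mul (γ (‖x0‖ + 1))
    exact (h1.eventually (gt_mem_nhds (half_pos hε))).exists
  set C := Real.exp T * Real.exp (K * T) with hC
  have hCpos : 0 < C := by positivity
  have key : ∀ x y, ‖x‖ ≤ ‖x0‖ + 1 → ‖y‖ ≤ ‖x0‖ + 1 → dist x y < ε / 2 / C →
      supV a A x ≤ supV a A y + ε / 2 := by
    intro x y hx hy hxy
    apply csSup_le (hne' x)
    rintro _ ⟨t, g, h, rfl⟩
    rcases le_total T t with ht | ht
    · have h1 := hbd t g h x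
      have h2 : γ ‖x‖ * Real.exp (-t) ≤ γ (‖x0‖ + 1) * Real.exp (-T) := by
        apply mul_le_mul _ (Real.exp_le_exp.2 (by linarith)) (Real.exp_pos _).le
          (hγ0 _ (by positivity))
        exact hγ (norm_nonneg x) (mem_Ici.2 (by positivity)) hx
      linarith [hV0 y]
    · have h1 : Real.exp t * a ‖g y‖ ≤ supV a A y := le_csSup (hbdd y) ⟨t, g, h, rfl⟩
      have h2 : a ‖g x‖ ≤ a ‖g y‖ + dist (g x) (g y) := by
        have h3 := ha.dist_le_mul ‖g x‖ ‖g y‖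
        rw [Real.dist_eq, Real.dist_eq] at h3
        have h4 := abs_norm_sub_norm_le (g x) (g y)
        rw [← dist_eq_norm] at h4
        have h5 := le_abs_self (a ‖g x‖ - a ‖g y‖)
        simp only [NNReal.coe_one, one_mul] at h3
        linarith
      have h3 := hK t g h x y hx hy
      have h4 : Real.exp t * dist (g x) (g y) ≤ C * dist x y := by
        calc _ ≤ Real.exp T * (dist x y * Real.exp (K * T)) := by
              apply mul_le_mul (Real.exp_le_exp.2 ht) (h3.trans _) dist_nonneg (Real.exp_pos _).le
              gcongr
          _ = _ := by rw [hC]; ring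
      have h5 : C * dist x y < ε / 2 := by
        rw [lt_div_iff₀ hCpos] at hxy
        linarith
      have h6 := mul_le_mul_of_nonneg_left h2 (Real.exp_pos t).le
      rw [mul_add] at h6
      linarith
  refine ⟨min 1 (ε / 2 / C), by positivity, ?_⟩
  intro x hx
  have hx1 : dist x x0 < 1 := hx.trans_le (min_le_left _ _)
  have hx2 : dist x x0 < ε / 2 / C := hx.trans_le (min_le_right _ _)
  have hxn : ‖x‖ ≤ ‖x0‖ + 1 := by
    have := norm_le_norm_add_norm_sub' x x0
    rw [← dist_eq_norm] at this
    linarith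
  have k1 := key x x0 hxn (by linarith) hx2
  have k2 := key x0 x (by linarith) hxn (by rwa [dist_comm])
  rw [Real.dist_eq, abs_lt]
  constructor <;> linarith

/-- Theorem 1, necessity: if the switched system is GUAS on `S_dw(τ1,τ2)`,
then there exist multiple Lyapunov functions `V_i^−, V_i^+` as in Theorem 1. -/
theorem multiple_lyapunov_of_guas {n M : ℕ}
    (f : Fin M → EuclideanSpace ℝ (Fin n) → EuclideanSpace ℝ (Fin n))
    (Φ : Fin M → ℝ → EuclideanSpace ℝ (Fin n) → EuclideanSpace ℝ (Fin n))
    (hlip : ∀ i, LocallyLipschitz (f i))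
    (hf0 : ∀ i, f i 0 = 0)
    (hΦ0 : ∀ i x, Φ i 0 x = x)
    (hode : ∀ i x t, HasDerivAt (fun τ => Φ i τ x) (f i (Φ i t x)) t)
    (huniq : ∀ i (γ : ℝ → EuclideanSpace ℝ (Fin n)),
        (∀ t, HasDerivAt γ (f i (γ t)) t) → ∀ t, γ t = Φ i t (γ 0))
    (τ1 τ2 : ℝ) (hτ1 : 0 ≤ τ1) (hτ12 : τ1 ≤ τ2)
    (hGUAS : GUAS Φ (Sdw M τ1 τ2)) :
    ∃ (α1 α2 : ℝ → ℝ) (Vm Vp : Fin M → EuclideanSpace ℝ (Fin n) → ℝ),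
      ClassKInf α1 ∧ ClassKInf α2 ∧
      (∀ i, Continuous (Vm i)) ∧ (∀ i, Continuous (Vp i)) ∧
      (∀ i, ∀ x, (α1 ‖x‖ ≤ Vm i x ∧ Vm i x ≤ α2 ‖x‖) ∧
        (α1 ‖x‖ ≤ Vp i x ∧ Vp i x ≤ α2 ‖x‖)) ∧
      (∀ i, ∀ t ∈ Icc (0 : ℝ) (τ2 - τ1), ∀ x,
        Vp i (Φ i t x) ≤ Real.exp (-t) * Vm i x) ∧
      (∀ i j, i ≠ j → ∀ x, Vm j (Φ i τ1 x) ≤ Real.exp (-τ1) * Vp i x) := by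
  obtain ⟨β, hβ, hb⟩ := hGUAS
  obtain ⟨a, γ, haL, haM, ha0, hapos, hatop, hγ, haβ⟩ := kl_lemma β hβ
  have hanti : ∀ r ≥ 0, ∀ t ≥ 0, β r t ≤ β r 0 := fun r hr t ht =>
    (hβ.2.2.1 r hr).1 (mem_Ici.2 le_rfl) (mem_Ici.2 ht) ht
  have hmon : ∀ t ≥ 0, ∀ r ≥ 0, ∀ r' ≥ r, β r t ≤ β r' t := fun t ht r hr r' hr' =>
    (hβ.2.1 t ht).2.monotoneOn (mem_Ici.2 hr) (mem_Ici.2 (le_trans hr hr')) hr'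
  have hgr : ∀ (x : EuclideanSpace ℝ (Fin n)) (R t : ℝ), 0 ≤ t → ‖x‖ ≤ R →
      β ‖x‖ t ≤ β R 0 := fun x R t ht hx =>
    (hanti _ (norm_nonneg x) t ht).trans (hmon 0 le_rfl _ (norm_nonneg x) _ hx)
  have hcont := flow_cont f Φ hlip hΦ0 hode (fun R => ⟨β R 0, fun i x t ht hx =>
    ((Adm.base i t ht).bound_pos hb x).trans (hgr x R t ht hx)⟩)
  have hsemi : ∀ i s t x, Φ i s (Φ i t x) = Φ i (s + t) x := by
    intro i s t x
    have := huniq i (fun r => Φ i (r + t) x) (fun r => (hode i x (r + t)).comp_add_const r t) s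
    simp only [zero_add] at this
    exact this.symm
  let D : ℝ → Prop := fun d => d ∈ Icc τ1 τ2
  have hD : ∀ d, D d → 0 ≤ d := fun d hd => hτ1.trans hd.1
  let Am : Fin M → ℝ → (EuclideanSpace ℝ (Fin n) → EuclideanSpace ℝ (Fin n)) → Prop :=
    fun i t g => Adm Φ D i t g
  let Ap : Fin M → ℝ → (EuclideanSpace ℝ (Fin n) → EuclideanSpace ℝ (Fin n)) → Prop :=
    fun i t g => (0 ≤ t ∧ g = Φ i t) ∨ ∃ j s h, i ≠ j ∧ Adm Φ D j s h ∧ t = s + τ1 ∧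
      g = fun x => h (Φ i τ1 x)
  have hpm : ∀ i t g, Ap i t g → Am i t g := by
    rintro i t g (⟨ht, rfl⟩ | ⟨j, s, h, hij, hA, rfl, rfl⟩)
    · exact Adm.base i t ht
    · exact Adm.step i j τ1 s h hij ⟨le_rfl, hτ12⟩ hA
  have ann : ∀ r ≥ 0, 0 ≤ a r := fun r hr => by rw [← ha0]; exact haM hr
  have hγn := hγ.2.2.2.2
  have hbm : ∀ i t g, Am i t g → ∀ x, Real.exp t * a ‖g x‖ ≤ γ ‖x‖ * Real.exp (-t) := by
    intro i t g h x
    have ht : 0 ≤ t := Adm.nonneg hD h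
    have h1 := (haM (Adm.bound hΦ0 hcont hτ1 hτ12 hβ hb h x)).trans
      (haβ ‖x‖ (norm_nonneg x) t ht)
    calc _ ≤ Real.exp t * (γ ‖x‖ * Real.exp (-2 * t)) :=
          mul_le_mul_of_nonneg_left h1 (Real.exp_pos t).le
      _ = γ ‖x‖ * (Real.exp t * Real.exp (-2 * t)) := by ring
      _ = _ := by rw [← Real.exp_add]; congr 2; ring
  have hbγ : ∀ i t g, Am i t g → ∀ x, Real.exp t * a ‖g x‖ ≤ γ ‖x‖ := by
    intro i t g h x
    refine (hbm i t g h x).trans (mul_le_of_le_one_right (hγn _ (norm_nonneg _)) ?_)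
    exact Real.exp_le_one_iff.2 (by linarith [Adm.nonneg hD h])
  have hlipm : ∀ i R, ∃ K : NNReal, ∀ t g, Am i t g → ∀ x y, ‖x‖ ≤ R → ‖y‖ ≤ R →
      dist (g x) (g y) ≤ dist x y * Real.exp (K * t) := by
    intro i R
    obtain ⟨K, hK⟩ := flow_lip f Φ hlip hΦ0 hode (β R 0)
    have hin : ∀ x : EuclideanSpace ℝ (Fin n), ‖x‖ ≤ R → ∀ s h, Adm Φ D i s h →
        ‖h x‖ ≤ β R 0 := fun x hx s h hs =>
      (Adm.bound hΦ0 hcont hτ1 hτ12 hβ hb hs x).trans (hgr x R s (Adm.nonneg hD hs) hx)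
    exact ⟨K, fun t g h x y hx hy => Adm.lip hD hK h x y (hin x hx) (hin y hy)⟩
  have hidp : ∀ i, Ap i 0 (Φ i 0) := fun i => Or.inl ⟨le_rfl, rfl⟩
  have hidm : ∀ i, Am i 0 (Φ i 0) := fun i => hpm i _ _ (hidp i)
  have hbddm : ∀ i x, BddAbove {v | ∃ t g, Am i t g ∧ v = Real.exp t * a ‖g x‖} := by
    intro i x
    exact ⟨γ ‖x‖, by rintro _ ⟨t, g, h, rfl⟩; exact hbγ i t g h x⟩
  have hbddp : ∀ i x, BddAbove {v | ∃ t g, Ap i t g ∧ v = Real.exp t * a ‖g x‖} := by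
    intro i x
    exact ⟨γ ‖x‖, by rintro _ ⟨t, g, h, rfl⟩; exact hbγ i t g (hpm i t g h) x⟩
  have hfrac : ∀ r ≥ 0, a r * (r / (1 + r)) ≤ a r := fun r hr =>
    mul_le_of_le_one_right (ann r hr) ((div_le_one (by linarith)).2 (by linarith))
  refine ⟨fun r => a r * (r / (1 + r)), γ, fun i => supV a (Am i), fun i => supV a (Ap i),
    ?_, hγ, ?_, ?_, ?_, ?_, ?_⟩
  · have hfm : ∀ r ≥ (0:ℝ), ∀ s > r, r / (1 + r) < s / (1 + s) := by
      intro r hr s hs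
      rw [div_lt_div_iff₀ (by linarith) (by linarith)]
      nlinarith
    refine ⟨?_, by simp, ?_, ?_, ?_⟩
    · refine haL.continuous.continuousOn.mul (continuousOn_id.div (by fun_prop) ?_)
      intro r hr
      have : (0:ℝ) ≤ r := hr
      positivity
    · intro r hr s hs hrs
      have hr' : (0:ℝ) ≤ r := hr
      have hs' : 0 < s := lt_of_le_of_lt hr' hrs
      calc a r * (r / (1 + r)) ≤ a s * (r / (1 + r)) :=
            mul_le_mul_of_nonneg_right (haM hrs.le) (by positivity)
        _ < a s * (s / (1 + s)) := mul_lt_mul_of_pos_left (hfm r hr' s hrs) (hapos s hs')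
    · refine tendsto_atTop_mono' _ ?_ (hatop.atTop_div_const (r := 2) (by norm_num))
      filter_upwards [eventually_ge_atTop 1] with r hr
      rw [div_eq_mul_inv]
      apply mul_le_mul_of_nonneg_left _ (ann r (by linarith))
      rw [inv_eq_one_div, div_le_div_iff₀ (by norm_num) (by linarith)]
      linarith
    · intro r hr
      have hr' : (0:ℝ) ≤ r := hr
      exact mul_nonneg (ann r hr') (by positivity)
  · intro i
    exact supV_continuous haL hγ.2.2.1.monotoneOn hγn ann ⟨_, _, hidm i⟩
      (fun t g h => Adm.nonneg hD h) (hbm i) (hlipm i)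
  · intro i
    refine supV_continuous haL hγ.2.2.1.monotoneOn hγn ann ⟨_, _, hidp i⟩
      (fun t g h => Adm.nonneg hD (hpm i t g h)) (fun t g h => hbm i t g (hpm i t g h)) ?_
    intro R
    obtain ⟨K, hK⟩ := hlipm i R
    exact ⟨K, fun t g h => hK t g (hpm i t g h)⟩
  · intro i x
    refine ⟨⟨?_, ?_⟩, ⟨?_, ?_⟩⟩
    · refine (hfrac _ (norm_nonneg x)).trans (le_csSup (hbddm i x) ⟨0, _, hidm i, ?_⟩)
      simp [hΦ0]
    · refine supV_le ⟨0, _, hidm i⟩ ?_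
      intro t g h
      exact hbγ i t g h x
    · refine (hfrac _ (norm_nonneg x)).trans (le_csSup (hbddp i x) ⟨0, _, hidp i, ?_⟩)
      simp [hΦ0]
    · refine supV_le ⟨0, _, hidp i⟩ ?_
      intro t g h
      exact hbγ i t g (hpm i t g h) x
  · intro i t ht x
    refine supV_le ⟨0, _, hidp i⟩ ?_
    intro s g h
    have h1 : Am i (s + t) (fun x => g (Φ i t x)) := by
      rcases h with ⟨hs, rfl⟩ | ⟨j, s', h, hij, hA, rfl, rfl⟩
      · have : (fun x => Φ i s (Φ i t x)) = Φ i (s + t) := funext fun x => hsemi i s t x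
        rw [this]
        exact Adm.base i _ (add_nonneg hs ht.1)
      · have : (fun x => (fun x => h (Φ i τ1 x)) (Φ i t x)) = fun x => h (Φ i (τ1 + t) x) :=
          funext fun x => by simp [hsemi]
        rw [this, add_assoc]
        exact Adm.step i j _ _ _ hij ⟨by linarith [ht.1], by linarith [ht.2]⟩ hA
    have h2 : Real.exp (s + t) * a ‖g (Φ i t x)‖ ≤ supV a (Am i) x :=
      le_csSup (hbddm i x) ⟨s + t, _, h1, rfl⟩
    calc _ = Real.exp (-t) * (Real.exp (s + t) * a ‖g (Φ i t x)‖) := by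
          rw [← mul_assoc, ← Real.exp_add]; congr 2; ring
      _ ≤ _ := mul_le_mul_of_nonneg_left h2 (Real.exp_pos _).le
  · intro i j hij x
    refine supV_le ⟨0, _, hidm j⟩ ?_
    intro s g h
    have h1 : Ap i (s + τ1) (fun x => g (Φ i τ1 x)) :=
      Or.inr ⟨j, s, g, hij, h, rfl, rfl⟩
    have h2 : Real.exp (s + τ1) * a ‖g (Φ i τ1 x)‖ ≤ supV a (Ap i) x :=
      le_csSup (hbddp i x) ⟨s + τ1, _, h1, rfl⟩
    calc _ = Real.exp (-τ1) * (Real.exp (s + τ1) * a ‖g (Φ i τ1 x)‖) := by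
          rw [← mul_assoc, ← Real.exp_add]; congr 2; ring
      _ ≤ _ := mul_le_mul_of_nonneg_left h2 (Real.exp_pos _).le
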